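/- arXiv:1301.0699 — 7 statements merged into one kernel-verified Lean document; each statement's English description precedes it below -/
import Mathlib

section
/- Let p, q > 1 and a ≥ 1. Then arcsin_{p,q} is (a,a)-convex on (0,1): for all r, s ∈ (0,1), arcsin_{p,q}(((r^a + s^a)/2)^{1/a}) ≤ ((arcsin_{p,q}(r)^a + arcsin_{p,q}(s)^a)/2)^{1/a}. -/
open Real Set

/-- `arcsinPQ p q x = ∫₀ˣ (1 - tᵠ)^(-1/p) dt`, the generalized inverse sine. -/
noncomputable def arcsinPQ (p q x : ℝ) : ℝ := ∫ t in (0:ℝ)..x, (1 - t ^ q) ^ (-(1/p))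

/-- The integrand of `arcsinPQ` is increasing on `[0, 1)`. -/
lemma monotoneOn_arcsinPQ_integrand {p q : ℝ} (hp : 0 ≤ p) (hq : 0 < q) :
    MonotoneOn (fun t : ℝ => (1 - t ^ q) ^ (-(1/p))) (Ico 0 1) := by
  intro x hx y hy hxy
  have hy1 : y ^ q < 1 := rpow_lt_one hy.1 hy.2 hq
  have hxy' : x ^ q ≤ y ^ q := rpow_le_rpow hx.1 hxy hq.le
  exact rpow_le_rpow_of_nonpos (by linarith) (by linarith)
    (neg_nonpos.mpr (one_div_nonneg.mpr hp))

/-- The integral of an increasing function is at most the value at the upper endpoint times the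
signed length of the interval. -/
lemma integral_le_mul_sub_of_monotoneOn {h : ℝ → ℝ} {x m : ℝ} (hh : MonotoneOn h (uIcc x m)) :
    ∫ t in x..m, h t ≤ h m * (m - x) := by
  have hi : IntervalIntegrable h MeasureTheory.volume x m := hh.intervalIntegrable
  rcases le_total x m with hxm | hmx
  · have := intervalIntegral.integral_mono_on hxm hi
      (intervalIntegrable_const (c := h m))
      (fun t ht => hh (uIcc_of_le hxm ▸ ht) right_mem_uIcc ht.2)
    rw [intervalIntegral.integral_const, smul_eq_mul] at this
    linarith
  · have := intervalIntegral.integral_mono_on hmx (intervalIntegrable_const (c := h m)) hi.symm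
      (fun t ht => hh right_mem_uIcc (uIcc_of_ge hmx ▸ ht) ht.1)
    rw [intervalIntegral.integral_const, smul_eq_mul] at this
    rw [intervalIntegral.integral_symm]
    linarith

/-- The graph of `arcsinPQ` lies above its tangent lines. -/
lemma arcsinPQ_sub_le {p q x m : ℝ} (hp : 0 ≤ p) (hq : 0 < q) (hx : x ∈ Ico (0:ℝ) 1)
    (hm : m ∈ Ico (0:ℝ) 1) :
    arcsinPQ p q m - arcsinPQ p q x ≤ (1 - m ^ q) ^ (-(1/p)) * (m - x) := by
  have hmono := monotoneOn_arcsinPQ_integrand hp hq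
  have h0 : (0:ℝ) ∈ Ico (0:ℝ) 1 := ⟨le_rfl, one_pos⟩
  have hsub {u v : ℝ} (hu : u ∈ Ico (0:ℝ) 1) (hv : v ∈ Ico (0:ℝ) 1) : uIcc u v ⊆ Ico 0 1 :=
    ordConnected_Ico.uIcc_subset hu hv
  unfold arcsinPQ
  rw [intervalIntegral.integral_interval_sub_left (hmono.mono (hsub h0 hm)).intervalIntegrable
    (hmono.mono (hsub h0 hx)).intervalIntegrable]
  exact integral_le_mul_sub_of_monotoneOn (hmono.mono (hsub hx hm))

lemma arcsinPQ_nonneg {p q x : ℝ} (hq : 0 ≤ q) (hx : x ∈ Ico (0:ℝ) 1) :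
    0 ≤ arcsinPQ p q x :=
  intervalIntegral.integral_nonneg hx.1 fun _ ht =>
    rpow_nonneg (sub_nonneg.mpr (rpow_le_one ht.1 (ht.2.trans hx.2.le) hq)) _

/-- Minkowski's inequality for the power mean of two numbers, one summand being constant. -/
lemma powerMean_add_const_le {a u v c : ℝ} (ha : 1 ≤ a) (hu : 0 ≤ u) (hv : 0 ≤ v) (hc : 0 ≤ c) :
    (((u + c) ^ a + (v + c) ^ a) / 2) ^ (1/a) ≤ ((u ^ a + v ^ a) / 2) ^ (1/a) + c := by
  have ha0 : a ≠ 0 := by positivity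
  have hM := Real.Lp_add_le_of_nonneg (s := Finset.univ) (f := ![u, v]) (g := ![c, c]) ha
    (by simp [Fin.forall_fin_two, hu, hv]) (by simp [Fin.forall_fin_two, hc])
  simp only [Fin.sum_univ_two, Matrix.cons_val_zero, Matrix.cons_val_one] at hM
  have hcc : ((c ^ a + c ^ a) / 2) ^ (1/a) = c := by
    rw [add_self_div_two, one_div, rpow_rpow_inv hc ha0]
  nth_rewrite 3 [← hcc]
  rw [div_rpow (by positivity) (by positivity), div_rpow (by positivity) (by positivity),
    div_rpow (by positivity) (by positivity), ← add_div]
  gcongr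

theorem arcsinPQ_aa_convex (p q a : ℝ) (hp : 1 < p) (hq : 1 < q) (ha : 1 ≤ a)
    (r s : ℝ) (hr : r ∈ Set.Ioo (0:ℝ) 1) (hs : s ∈ Set.Ioo (0:ℝ) 1) :
    arcsinPQ p q (((r ^ a + s ^ a) / 2) ^ (1/a)) ≤
      ((arcsinPQ p q r ^ a + arcsinPQ p q s ^ a) / 2) ^ (1/a) := by
  have ha0 : 0 < a := by positivity
  have hp0 : 0 ≤ p := by positivity
  have hq0 : 0 < q := by positivity
  have hr0 : 0 < r := hr.1
  have hs0 : 0 < s := hs.1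
  have hr' : r ∈ Ico (0:ℝ) 1 := Ioo_subset_Ico_self hr
  have hs' : s ∈ Ico (0:ℝ) 1 := Ioo_subset_Ico_self hs
  set m := ((r ^ a + s ^ a) / 2) ^ (1/a) with hm_def
  have hm : m ∈ Ico (0:ℝ) 1 := by
    refine ⟨by positivity, rpow_lt_one (by positivity) ?_ (by positivity)⟩
    linarith [rpow_lt_one hr0.le hr.2 ha0, rpow_lt_one hs0.le hs.2 ha0]
  have htangent_r := arcsinPQ_sub_le hp0 hq0 hr' hm
  have htangent_s := arcsinPQ_sub_le hp0 hq0 hs' hm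
  have htangent_zero := arcsinPQ_sub_le hp0 hq0 ⟨le_rfl, one_pos⟩ hm
  have hzero : arcsinPQ p q 0 = 0 := intervalIntegral.integral_same
  have hα : 0 ≤ (1 - m ^ q) ^ (-(1/p)) :=
    rpow_nonneg (sub_nonneg.mpr (rpow_le_one hm.1 hm.2.le hq0.le)) _
  set α := (1 - m ^ q) ^ (-(1/p))
  have hfr := arcsinPQ_nonneg (p := p) hq0.le hr'
  have hfs := arcsinPQ_nonneg (p := p) hq0.le hs'
  have hM := powerMean_add_const_le ha hfr hfs (c := α * m - arcsinPQ p q m) (by linarith)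
  have hscale : α * m = (((α * r) ^ a + (α * s) ^ a) / 2) ^ (1/a) := by
    rw [mul_rpow hα hr0.le, mul_rpow hα hs0.le, ← mul_add, mul_div_assoc,
      mul_rpow (by positivity) (by positivity), one_div, rpow_rpow_inv hα ha0.ne', hm_def, one_div]
  have hle : α * m ≤ (((arcsinPQ p q r + (α * m - arcsinPQ p q m)) ^ a +
      (arcsinPQ p q s + (α * m - arcsinPQ p q m)) ^ a) / 2) ^ (1/a) := by
    conv_lhs => rw [hscale]
    gcongr <;> linarith
  linarith
end

section
/- Let p, q > 1 and a ≥ 1. Then arctan_{p,q} is (a,a)-concave on (0,1): for all r, s ∈ (0,1), arctan_{p,q}(((r^a + s^a)/2)^{1/a}) ≥ ((arctan_{p,q}(r)^a + arctan_{p,q}(s)^a)/2)^{1/a}. -/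
open Real Set

/-- `sinPQ p q` is the inverse function of `arcsinPQ p q` (restricted to `[0,1]`). -/
noncomputable def sinPQ (p q : ℝ) : ℝ → ℝ := Function.invFunOn (arcsinPQ p q) (Set.Icc 0 1)

/-- `cosPQ p q x = (1 - sinPQ p q x ^ q)^(1/p)`. -/
noncomputable def cosPQ (p q x : ℝ) : ℝ := (1 - sinPQ p q x ^ q) ^ (1/p)

/-- `tanPQ p q x = sinPQ p q x / cosPQ p q x`. -/
noncomputable def tanPQ (p q x : ℝ) : ℝ := sinPQ p q x / cosPQ p q x

/-- `arctanPQ p q` is the inverse function of `tanPQ p q` (restricted to `(0, π_{p,q}/2)`). -/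
noncomputable def arctanPQ (p q : ℝ) : ℝ → ℝ :=
  Function.invFunOn (tanPQ p q) (Set.Ioo 0 (arcsinPQ p q 1))

/-- The power mean of affine images is at most the affine image of the power mean. -/
lemma powerMean_affine_le {a b c r s : ℝ} (ha : 1 ≤ a) (hb : 0 ≤ b) (hc : 0 ≤ c)
    (hr : 0 ≤ r) (hs : 0 ≤ s) :
    (((b + c * r) ^ a + (b + c * s) ^ a) / 2) ^ (1 / a) ≤
      b + c * ((r ^ a + s ^ a) / 2) ^ (1 / a) := by
  have ha0 : a ≠ 0 := by positivity
  have hcr : 0 ≤ c * r := mul_nonneg hc hr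
  have hcs : 0 ≤ c * s := mul_nonneg hc hs
  have minkowski := Real.Lp_add_le_of_nonneg (Finset.univ : Finset (Fin 2)) (f := fun _ => b)
    (g := ![c * r, c * s]) ha (fun _ _ => hb)
    (fun i _ => by fin_cases i <;> simpa)
  simp only [Fin.sum_univ_two, Matrix.cons_val_zero, Matrix.cons_val_one] at minkowski
  have hleft : (b ^ a + b ^ a) ^ (1 / a) = 2 ^ (1 / a) * b := by
    rw [← two_mul, Real.mul_rpow (by norm_num) (by positivity), one_div, Real.rpow_rpow_inv hb ha0]
  have hright : ((c * r) ^ a + (c * s) ^ a) ^ (1 / a) = c * (r ^ a + s ^ a) ^ (1 / a) := by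
    rw [Real.mul_rpow hc hr, Real.mul_rpow hc hs, ← mul_add,
      Real.mul_rpow (by positivity) (by positivity), one_div, Real.rpow_rpow_inv hc ha0]
  rw [hleft, hright] at minkowski
  rw [Real.div_rpow (by positivity) (by norm_num), Real.div_rpow (by positivity) (by norm_num),
    div_le_iff₀ (by positivity)]
  refine minkowski.trans_eq ?_
  field_simp

/-- A function lying below an increasing line through the point at `M_a(r, s)`, with nonnegative
intercept, satisfies the `(a,a)`-concavity inequality at `r, s`. -/
lemma powerMean_le_of_le_tangent {f : ℝ → ℝ} {a c r s : ℝ} (ha : 1 ≤ a) (hc : 0 ≤ c)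
    (hr : 0 ≤ r) (hs : 0 ≤ s) (hfr : 0 ≤ f r) (hfs : 0 ≤ f s)
    (hb : c * ((r ^ a + s ^ a) / 2) ^ (1 / a) ≤ f (((r ^ a + s ^ a) / 2) ^ (1 / a)))
    (htr : f r ≤ f (((r ^ a + s ^ a) / 2) ^ (1 / a)) + c * (r - ((r ^ a + s ^ a) / 2) ^ (1 / a)))
    (hts : f s ≤ f (((r ^ a + s ^ a) / 2) ^ (1 / a)) + c * (s - ((r ^ a + s ^ a) / 2) ^ (1 / a))) :
    ((f r ^ a + f s ^ a) / 2) ^ (1 / a) ≤ f (((r ^ a + s ^ a) / 2) ^ (1 / a)) := by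
  have affine := powerMean_affine_le ha (sub_nonneg.2 hb) hc hr hs
  set m := ((r ^ a + s ^ a) / 2) ^ (1 / a)
  have hfr' : f r ^ a ≤ (f m - c * m + c * r) ^ a :=
    Real.rpow_le_rpow hfr (by linarith) (by linarith)
  have hfs' : f s ^ a ≤ (f m - c * m + c * s) ^ a :=
    Real.rpow_le_rpow hfs (by linarith) (by linarith)
  calc ((f r ^ a + f s ^ a) / 2) ^ (1 / a)
      ≤ (((f m - c * m + c * r) ^ a + (f m - c * m + c * s) ^ a) / 2) ^ (1 / a) := by
        apply Real.rpow_le_rpow (by positivity) (by linarith) (by positivity)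
    _ ≤ f m - c * m + c * m := affine
    _ = f m := by ring

section GeneralizedTrig

variable {p q : ℝ}

lemma one_sub_rpow_pos (hq : 1 < q) {x : ℝ} (hx : x ∈ Ico (0 : ℝ) 1) : 0 < 1 - x ^ q :=
  sub_pos.2 (Real.rpow_lt_one hx.1 hx.2 (by linarith))

lemma intervalIntegrable_arcsinPQ (hp : 1 < p) (hq : 1 < q) :
    IntervalIntegrable (fun t : ℝ => (1 - t ^ q) ^ (-(1 / p))) MeasureTheory.volume 0 1 := by
  have hp1 : 1 / p < 1 := by rw [div_lt_one (by linarith)]; exact hp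
  have hdom : IntervalIntegrable (fun t : ℝ => (1 - t) ^ (-(1 / p))) MeasureTheory.volume 0 1 := by
    have := (intervalIntegral.intervalIntegrable_rpow' (a := 0) (b := 1) (r := -(1 / p))
      (by linarith)).comp_sub_left 1
    simpa using this.symm
  refine hdom.mono_fun (Measurable.aestronglyMeasurable (by measurability)) ?_
  rw [uIoc_of_le zero_le_one, ← MeasureTheory.restrict_Ioo_eq_restrict_Ioc]
  filter_upwards [MeasureTheory.ae_restrict_mem measurableSet_Ioo] with t ht
  have hpos := one_sub_rpow_pos hq ⟨ht.1.le, ht.2⟩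
  have hle : t ^ q ≤ t := by
    simpa using Real.rpow_le_rpow_of_exponent_ge ht.1 ht.2.le hq.le
  have h1t : 0 < 1 - t := sub_pos.2 ht.2
  rw [Real.norm_of_nonneg (by positivity), Real.norm_of_nonneg (by positivity)]
  apply Real.rpow_le_rpow_of_nonpos h1t (by linarith)
  have : 0 < 1 / p := by positivity
  linarith

lemma intervalIntegrable_arcsinPQ_of_mem (hp : 1 < p) (hq : 1 < q) {x y : ℝ}
    (hx : x ∈ Icc (0 : ℝ) 1) (hy : y ∈ Icc (0 : ℝ) 1) :
    IntervalIntegrable (fun t : ℝ => (1 - t ^ q) ^ (-(1 / p))) MeasureTheory.volume x y := by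
  refine (intervalIntegrable_arcsinPQ hp hq).mono_set ?_
  rw [uIcc_of_le zero_le_one]
  exact uIcc_subset_Icc hx hy

lemma strictMonoOn_arcsinPQ (hp : 1 < p) (hq : 1 < q) :
    StrictMonoOn (arcsinPQ p q) (Icc 0 1) := by
  intro x hx y hy hxy
  have h0 : (0 : ℝ) ∈ Icc (0 : ℝ) 1 := by simp
  have hpos : 0 < ∫ t in x..y, (1 - t ^ q) ^ (-(1 / p)) := by
    refine intervalIntegral.intervalIntegral_pos_of_pos_on
      (intervalIntegrable_arcsinPQ_of_mem hp hq hx hy) (fun t ht => ?_) hxy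
    exact Real.rpow_pos_of_pos
      (one_sub_rpow_pos hq ⟨hx.1.trans ht.1.le, ht.2.trans_le hy.2⟩) _
  rw [← intervalIntegral.integral_interval_sub_left
    (intervalIntegrable_arcsinPQ_of_mem hp hq h0 hy)
    (intervalIntegrable_arcsinPQ_of_mem hp hq h0 hx)] at hpos
  exact sub_pos.1 hpos

lemma continuousOn_arcsinPQ (hp : 1 < p) (hq : 1 < q) :
    ContinuousOn (arcsinPQ p q) (Icc 0 1) := by
  have := intervalIntegral.continuousOn_primitive_interval'
    (intervalIntegrable_arcsinPQ hp hq) (left_mem_uIcc)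
  rwa [uIcc_of_le zero_le_one] at this

lemma arcsinPQ_zero : arcsinPQ p q 0 = 0 := intervalIntegral.integral_same

lemma arcsinPQ_mem_Ioo (hp : 1 < p) (hq : 1 < q) {u : ℝ} (hu : u ∈ Ioo (0 : ℝ) 1) :
    arcsinPQ p q u ∈ Ioo 0 (arcsinPQ p q 1) := by
  have hmono := strictMonoOn_arcsinPQ hp hq
  refine ⟨?_, hmono ⟨hu.1.le, hu.2.le⟩ (by simp) hu.2⟩
  simpa [arcsinPQ_zero] using hmono (by simp) ⟨hu.1.le, hu.2.le⟩ hu.1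

lemma sinPQ_arcsinPQ (hp : 1 < p) (hq : 1 < q) {u : ℝ} (hu : u ∈ Icc (0 : ℝ) 1) :
    sinPQ p q (arcsinPQ p q u) = u :=
  (strictMonoOn_arcsinPQ hp hq).injOn.leftInvOn_invFunOn hu

/-- The tangent as a function of the sine. -/
noncomputable def tanOfSin (p q u : ℝ) : ℝ := u * (1 - u ^ q) ^ (-(1 / p))

lemma tanPQ_arcsinPQ (hp : 1 < p) (hq : 1 < q) {u : ℝ} (hu : u ∈ Ico (0 : ℝ) 1) :
    tanPQ p q (arcsinPQ p q u) = tanOfSin p q u := by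
  rw [tanPQ, cosPQ, sinPQ_arcsinPQ hp hq ⟨hu.1, hu.2.le⟩, tanOfSin,
    Real.rpow_neg (one_sub_rpow_pos hq hu).le, div_eq_mul_inv]

/-- The quotient of the derivatives of `tanOfSin` and `arcsinPQ`. -/
noncomputable def tanSlope (p q u : ℝ) : ℝ := 1 + q / p * (u ^ q / (1 - u ^ q))

lemma one_le_tanSlope (hp : 1 < p) (hq : 1 < q) {u : ℝ} (hu : u ∈ Ico (0 : ℝ) 1) :
    1 ≤ tanSlope p q u := by
  have := one_sub_rpow_pos hq hu
  have := Real.rpow_nonneg hu.1 q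
  have : 0 ≤ q / p * (u ^ q / (1 - u ^ q)) := by positivity
  rw [tanSlope]
  linarith

lemma monotoneOn_tanSlope (hp : 1 < p) (hq : 1 < q) :
    MonotoneOn (tanSlope p q) (Ico 0 1) := by
  intro u hu v hv huv
  have hv' := one_sub_rpow_pos hq hv
  have huv' : u ^ q ≤ v ^ q := Real.rpow_le_rpow hu.1 huv (by linarith)
  have := Real.rpow_nonneg hv.1 q
  unfold tanSlope
  gcongr

lemma hasDerivAt_arcsinPQ (hp : 1 < p) (hq : 1 < q) {v : ℝ} (hv : v ∈ Ioo (0 : ℝ) 1) :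
    HasDerivAt (arcsinPQ p q) ((1 - v ^ q) ^ (-(1 / p))) v := by
  have hpos := one_sub_rpow_pos hq ⟨hv.1.le, hv.2⟩
  refine intervalIntegral.integral_hasDerivAt_right
    (intervalIntegrable_arcsinPQ_of_mem hp hq (by simp) ⟨hv.1.le, hv.2.le⟩)
    (Measurable.stronglyMeasurable (by measurability)).stronglyMeasurableAtFilter ?_
  exact (continuousAt_const.sub (Real.continuousAt_rpow_const _ _ (Or.inl hv.1.ne'))).rpow_const
    (Or.inl hpos.ne')

lemma hasDerivAt_tanOfSin (hq : 1 < q) {v : ℝ} (hv : v ∈ Ioo (0 : ℝ) 1) :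
    HasDerivAt (tanOfSin p q) ((1 - v ^ q) ^ (-(1 / p)) * tanSlope p q v) v := by
  have hpos := one_sub_rpow_pos hq ⟨hv.1.le, hv.2⟩
  have hder := (hasDerivAt_id v).mul ((((Real.hasDerivAt_rpow_const (p := q)
    (Or.inl hv.1.ne')).const_sub 1)).rpow_const (p := -(1 / p)) (Or.inl hpos.ne'))
  refine hder.congr_deriv ?_
  rw [tanSlope, Real.rpow_sub_one hpos.ne', Real.rpow_sub_one hv.1.ne']
  have := hv.1.ne'
  simp only [id]
  field_simp

lemma continuousOn_tanOfSin (hq : 1 < q) : ContinuousOn (tanOfSin p q) (Ico 0 1) := by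
  refine continuousOn_id.mul (ContinuousOn.rpow_const ?_ fun u hu =>
    Or.inl (one_sub_rpow_pos hq hu).ne')
  exact continuousOn_const.sub (continuousOn_id.rpow_const fun _ _ => Or.inr (by linarith))

lemma strictMonoOn_tanOfSin (hp : 1 < p) (hq : 1 < q) :
    StrictMonoOn (tanOfSin p q) (Ico 0 1) := by
  refine strictMonoOn_of_deriv_pos (convex_Ico 0 1) (continuousOn_tanOfSin hq) fun v hv => ?_
  rw [interior_Ico] at hv
  rw [(hasDerivAt_tanOfSin hq hv).deriv]
  have := one_sub_rpow_pos hq ⟨hv.1.le, hv.2⟩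
  have := one_le_tanSlope hp hq ⟨hv.1.le, hv.2⟩
  positivity

lemma exists_tanOfSin_eq (hp : 1 < p) (hq : 1 < q) {r : ℝ} (hr : 0 < r) :
    ∃ u ∈ Ioo (0 : ℝ) 1, tanOfSin p q u = r := by
  have hp0 : 0 < 1 / p := by positivity
  have hq0 : q ≠ 0 := by positivity
  have hcont : ContinuousOn (fun u : ℝ => u - r * (1 - u ^ q) ^ (1 / p)) (Icc 0 1) := by
    refine continuousOn_id.sub (continuousOn_const.mul (ContinuousOn.rpow_const ?_
      fun _ _ => Or.inr hp0.le))
    exact continuousOn_const.sub (continuousOn_id.rpow_const fun _ _ => Or.inr (by linarith))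
  obtain ⟨u, hu, hur⟩ := intermediate_value_Ioo zero_le_one hcont
    (show (0 : ℝ) ∈ Ioo _ _ by simp [Real.zero_rpow hq0, hr, (by positivity : p ≠ 0)])
  have hpos := one_sub_rpow_pos hq ⟨hu.1.le, hu.2⟩
  refine ⟨u, hu, ?_⟩
  rw [tanOfSin, Real.rpow_neg hpos.le, ← div_eq_mul_inv, div_eq_iff (by positivity)]
  exact sub_eq_zero.1 hur

lemma arctanPQ_tanOfSin (hp : 1 < p) (hq : 1 < q) {u : ℝ} (hu : u ∈ Ioo (0 : ℝ) 1) :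
    arctanPQ p q (tanOfSin p q u) = arcsinPQ p q u := by
  have hex : ∃ y ∈ Ioo 0 (arcsinPQ p q 1), tanPQ p q y = tanOfSin p q u :=
    ⟨_, arcsinPQ_mem_Ioo hp hq hu, tanPQ_arcsinPQ hp hq ⟨hu.1.le, hu.2⟩⟩
  have hmem : arctanPQ p q (tanOfSin p q u) ∈ Ioo 0 (arcsinPQ p q 1) :=
    Function.invFunOn_mem hex
  have htan : tanPQ p q (arctanPQ p q (tanOfSin p q u)) = tanOfSin p q u :=
    Function.invFunOn_eq hex
  obtain ⟨w, hw, hwy⟩ := intermediate_value_Ioo zero_le_one (continuousOn_arcsinPQ hp hq)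
    (by rwa [arcsinPQ_zero])
  rw [← hwy, tanPQ_arcsinPQ hp hq ⟨hw.1.le, hw.2⟩] at htan
  rw [← hwy, (strictMonoOn_tanOfSin hp hq).injOn ⟨hw.1.le, hw.2⟩ ⟨hu.1.le, hu.2⟩ htan]

/-- The tangent line inequality expressing concavity of `arctanPQ`, in the sine parameter. -/
lemma arcsinPQ_le_tangent (hp : 1 < p) (hq : 1 < q) {u v : ℝ} (hu : u ∈ Ioo (0 : ℝ) 1)
    (hv : v ∈ Ico (0 : ℝ) 1) :
    arcsinPQ p q v ≤
      arcsinPQ p q u + (tanSlope p q u)⁻¹ * (tanOfSin p q v - tanOfSin p q u) := by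
  set c := (tanSlope p q u)⁻¹ with hc
  have hu' : u ∈ Ico (0 : ℝ) 1 := ⟨hu.1.le, hu.2⟩
  have hslope : 0 < tanSlope p q u := zero_lt_one.trans_le (one_le_tanSlope hp hq hu')
  have hcont : ContinuousOn (fun x => arcsinPQ p q x - c * tanOfSin p q x) (Ico 0 1) :=
    ((continuousOn_arcsinPQ hp hq).mono Ico_subset_Icc_self).sub
      (continuousOn_const.mul (continuousOn_tanOfSin hq))
  have hderiv : ∀ x ∈ Ioo (0 : ℝ) 1,
      HasDerivAt (fun x => arcsinPQ p q x - c * tanOfSin p q x)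
        ((1 - x ^ q) ^ (-(1 / p)) * (1 - c * tanSlope p q x)) x := fun x hx =>
    ((hasDerivAt_arcsinPQ hp hq hx).sub ((hasDerivAt_tanOfSin hq hx).const_mul c)).congr_deriv
      (by ring)
  have hmax : arcsinPQ p q v - c * tanOfSin p q v ≤ arcsinPQ p q u - c * tanOfSin p q u := by
    rcases le_total v u with hvu | huv
    · refine monotoneOn_of_deriv_nonneg (convex_Icc 0 u)
        (hcont.mono (Icc_subset_Ico_right hu.2)) ?_ ?_ ⟨hv.1, hvu⟩ ⟨hu.1.le, le_rfl⟩ hvu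
      · intro x hx
        rw [interior_Icc] at hx
        exact (hderiv x ⟨hx.1, hx.2.trans hu.2⟩).differentiableAt.differentiableWithinAt
      · intro x hx
        rw [interior_Icc] at hx
        have hx' : x ∈ Ico (0 : ℝ) 1 := ⟨hx.1.le, hx.2.trans hu.2⟩
        rw [(hderiv x ⟨hx.1, hx'.2⟩).deriv]
        refine mul_nonneg (Real.rpow_nonneg (one_sub_rpow_pos hq hx').le _) (sub_nonneg.2 ?_)
        rw [hc, inv_mul_le_one₀ hslope]
        exact monotoneOn_tanSlope hp hq hx' hu' hx.2.le
    · refine antitoneOn_of_deriv_nonpos (convex_Ico u 1)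
        (hcont.mono (Ico_subset_Ico_left hu.1.le)) ?_ ?_ ⟨le_rfl, hu.2⟩ ⟨huv, hv.2⟩ huv
      · intro x hx
        rw [interior_Ico] at hx
        exact (hderiv x ⟨hu.1.trans hx.1, hx.2⟩).differentiableAt.differentiableWithinAt
      · intro x hx
        rw [interior_Ico] at hx
        have hx' : x ∈ Ico (0 : ℝ) 1 := ⟨hu.1.le.trans hx.1.le, hx.2⟩
        rw [(hderiv x ⟨hu.1.trans hx.1, hx.2⟩).deriv]
        refine mul_nonpos_of_nonneg_of_nonpos
          (Real.rpow_nonneg (one_sub_rpow_pos hq hx').le _) (sub_nonpos.2 ?_)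
        rw [hc, one_le_inv_mul₀ hslope]
        exact monotoneOn_tanSlope hp hq hu' hx' hx.1.le
  linarith

end GeneralizedTrig

theorem arctanPQ_aa_concave (p q a : ℝ) (hp : 1 < p) (hq : 1 < q) (ha : 1 ≤ a)
    (r s : ℝ) (hr : r ∈ Set.Ioo (0:ℝ) 1) (hs : s ∈ Set.Ioo (0:ℝ) 1) :
    arctanPQ p q (((r ^ a + s ^ a) / 2) ^ (1/a)) ≥
      ((arctanPQ p q r ^ a + arctanPQ p q s ^ a) / 2) ^ (1/a) := by
  have hr0 := hr.1
  have hs0 := hs.1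
  obtain ⟨v, hv, hvr⟩ := exists_tanOfSin_eq hp hq hr0
  obtain ⟨w, hw, hws⟩ := exists_tanOfSin_eq hp hq hs0
  obtain ⟨u, hu, hum⟩ := exists_tanOfSin_eq hp hq
    (show 0 < ((r ^ a + s ^ a) / 2) ^ (1 / a) by positivity)
  have harctan_r : arctanPQ p q r = arcsinPQ p q v := hvr ▸ arctanPQ_tanOfSin hp hq hv
  have harctan_s : arctanPQ p q s = arcsinPQ p q w := hws ▸ arctanPQ_tanOfSin hp hq hw
  have harctan_m := arctanPQ_tanOfSin hp hq hu
  rw [hum] at harctan_m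
  have htangent_zero := arcsinPQ_le_tangent hp hq hu (v := 0) (by simp)
  have htangent_r := arcsinPQ_le_tangent hp hq hu ⟨hv.1.le, hv.2⟩
  have htangent_s := arcsinPQ_le_tangent hp hq hu ⟨hw.1.le, hw.2⟩
  rw [arcsinPQ_zero, hum, show tanOfSin p q 0 = 0 from zero_mul _] at htangent_zero
  rw [hum, hvr, ← harctan_m, ← harctan_r] at htangent_r
  rw [hum, hws, ← harctan_m, ← harctan_s] at htangent_s
  refine powerMean_le_of_le_tangent ha
    (inv_nonneg.2 (zero_le_one.trans (one_le_tanSlope hp hq ⟨hu.1.le, hu.2⟩))) hr0.le hs0.le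
    (harctan_r ▸ (arcsinPQ_mem_Ioo hp hq hv).1.le) (harctan_s ▸ (arcsinPQ_mem_Ioo hp hq hw).1.le)
    ?_ htangent_r htangent_s
  rw [harctan_m]
  linarith
end

section
/- Let p, q > 1 and a ≥ 1. Then arsinh_{p,q} is (a,a)-concave on (0,∞): for all r, s > 0, arsinh_{p,q}(((r^a + s^a)/2)^{1/a}) ≥ ((arsinh_{p,q}(r)^a + arsinh_{p,q}(s)^a)/2)^{1/a}. -/
open Real Set

/-- `arsinhPQ p q x = ∫₀ˣ (1 + tᵠ)^(-1/p) dt`, the generalized inverse hyperbolic sine. -/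
noncomputable def arsinhPQ (p q x : ℝ) : ℝ := ∫ t in (0:ℝ)..x, (1 + t ^ q) ^ (-(1/p))

/-- Translation inequality for the power mean of exponent `a ≥ 1`, a case of the Minkowski
inequality. -/
lemma powerMean_add_mul_le {a : ℝ} (ha : 1 ≤ a) {α β r s : ℝ} (hα : 0 ≤ α) (hβ : 0 ≤ β)
    (hr : 0 ≤ r) (hs : 0 ≤ s) :
    (((α + β * r) ^ a + (α + β * s) ^ a) / 2) ^ (1 / a) ≤
      α + β * ((r ^ a + s ^ a) / 2) ^ (1 / a) := by
  have ha0 : a ≠ 0 := by positivity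
  obtain ⟨c, hc, hca⟩ : ∃ c : ℝ, 0 ≤ c ∧ c ^ a = 1 / 2 :=
    ⟨(1 / 2) ^ a⁻¹, by positivity, rpow_inv_rpow (by norm_num) ha0⟩
  have key := Real.Lp_add_le_of_nonneg (s := Finset.univ) (f := ![α * c, α * c])
    (g := ![β * r * c, β * s * c]) ha
    (by intro i _; fin_cases i <;> simp <;> positivity)
    (by intro i _; fin_cases i <;> simp <;> positivity)
  simp only [Fin.sum_univ_two, Matrix.cons_val_zero, Matrix.cons_val_one, ← add_mul] at key
  have hroot : ∀ x : ℝ, 0 ≤ x → (x ^ a) ^ (1 / a) = x := fun x hx ↦ by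
    rw [one_div, rpow_rpow_inv hx ha0]
  have hαs : α ^ a * (1 / 2) + α ^ a * (1 / 2) = α ^ a := by ring
  have hβs : β ^ a * r ^ a * (1 / 2) + β ^ a * s ^ a * (1 / 2) =
      β ^ a * ((r ^ a + s ^ a) / 2) := by ring
  rw [mul_rpow (by positivity) hc, mul_rpow (by positivity) hc, mul_rpow hα hc,
    mul_rpow (by positivity) hc, mul_rpow (by positivity) hc, mul_rpow hβ hr, mul_rpow hβ hs,
    hca, hαs, hβs, hroot α hα, mul_rpow (by positivity) (by positivity), hroot β hβ] at key
  convert key using 2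
  ring

/-- The primitive of an antitone function lies below its tangent lines. -/
lemma AntitoneOn.intervalIntegral_le_mul_sub {g : ℝ → ℝ} {m x : ℝ}
    (hg : AntitoneOn g (uIcc m x)) : ∫ t in m..x, g t ≤ g m * (x - m) := by
  rcases le_total m x with h | h
  · calc ∫ t in m..x, g t ≤ ∫ _ in m..x, g m :=
          intervalIntegral.integral_mono_on h hg.intervalIntegrable
            intervalIntegrable_const fun t ht ↦
              hg left_mem_uIcc (by rwa [uIcc_of_le h]) ht.1
      _ = g m * (x - m) := by simp [mul_comm]
  · have : ∫ _ in x..m, g m ≤ ∫ t in x..m, g t :=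
      intervalIntegral.integral_mono_on h intervalIntegrable_const
        hg.intervalIntegrable.symm fun t ht ↦
          hg (by rwa [uIcc_of_ge h]) left_mem_uIcc ht.2
    rw [intervalIntegral.integral_const, smul_eq_mul] at this
    rw [intervalIntegral.integral_symm]
    linarith

lemma antitoneOn_one_add_rpow_rpow_neg {p q : ℝ} (hp : 0 ≤ p) (hq : 0 ≤ q) :
    AntitoneOn (fun t : ℝ ↦ (1 + t ^ q) ^ (-(1 / p))) (Ici 0) := by
  intro x hx y _ hxy
  have hx' : (0 : ℝ) ≤ x := hx
  exact rpow_le_rpow_of_nonpos (by positivity) (by gcongr) (by simpa using hp)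

lemma arsinhPQ_nonneg (p q : ℝ) {x : ℝ} (hx : 0 ≤ x) : 0 ≤ arsinhPQ p q x :=
  intervalIntegral.integral_nonneg hx fun t ht ↦ by
    have := ht.1
    positivity

lemma arsinhPQ_le_tangent {p q : ℝ} (hp : 0 ≤ p) (hq : 0 ≤ q) {m x : ℝ} (hm : 0 ≤ m)
    (hx : 0 ≤ x) :
    arsinhPQ p q x ≤ arsinhPQ p q m + (1 + m ^ q) ^ (-(1 / p)) * (x - m) := by
  have hanti : ∀ {u v : ℝ}, 0 ≤ u → 0 ≤ v →
      AntitoneOn (fun t : ℝ ↦ (1 + t ^ q) ^ (-(1 / p))) (uIcc u v) := fun hu hv ↦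
    (antitoneOn_one_add_rpow_rpow_neg hp hq).mono fun _ ht ↦ (le_min hu hv).trans ht.1
  have hadd := intervalIntegral.integral_add_adjacent_intervals (μ := MeasureTheory.volume)
    (hanti le_rfl hm).intervalIntegrable (hanti hm hx).intervalIntegrable
  have hle := (hanti hm hx).intervalIntegral_le_mul_sub
  unfold arsinhPQ
  linarith

theorem arsinhPQ_aa_concave (p q a : ℝ) (hp : 1 < p) (hq : 1 < q) (ha : 1 ≤ a)
    (r s : ℝ) (hr : 0 < r) (hs : 0 < s) :
    arsinhPQ p q (((r ^ a + s ^ a) / 2) ^ (1/a)) ≥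
      ((arsinhPQ p q r ^ a + arsinhPQ p q s ^ a) / 2) ^ (1/a) := by
  have hp0 : 0 ≤ p := by linarith
  have hq0 : 0 ≤ q := by linarith
  set m := ((r ^ a + s ^ a) / 2) ^ (1 / a)
  have hm : 0 ≤ m := by positivity
  set β := (1 + m ^ q) ^ (-(1 / p))
  have hβ : 0 ≤ β := by positivity
  have htangent : ∀ x, 0 ≤ x → arsinhPQ p q x ≤ (arsinhPQ p q m - β * m) + β * x := fun x hx ↦
    (arsinhPQ_le_tangent hp0 hq0 hm hx).trans_eq (by ring)
  have hα : 0 ≤ arsinhPQ p q m - β * m := by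
    simpa [arsinhPQ] using htangent 0 le_rfl
  have hfr := arsinhPQ_nonneg p q hr.le
  have hfs := arsinhPQ_nonneg p q hs.le
  calc ((arsinhPQ p q r ^ a + arsinhPQ p q s ^ a) / 2) ^ (1 / a)
      ≤ (((arsinhPQ p q m - β * m + β * r) ^ a +
          (arsinhPQ p q m - β * m + β * s) ^ a) / 2) ^ (1 / a) := by
        gcongr
        · exact htangent r hr.le
        · exact htangent s hs.le
    _ ≤ arsinhPQ p q m - β * m + β * m := powerMean_add_mul_le ha hα hβ hr.le hs.le
    _ = arsinhPQ p q m := by ring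
end

section
/- Let p, q > 1, a ≥ 0 and b ≤ 0. Then arsinh_{p,q} is (a,b)-concave on (0,∞): for all r, s > 0, arsinh_{p,q}(M_a(r,s)) ≥ M_b(arsinh_{p,q}(r), arsinh_{p,q}(s)). -/
open Real Set

/-- The power mean `M_a(x,y)`: `((x^a + y^a)/2)^(1/a)` for `a ≠ 0` and `√(xy)` for `a = 0`. -/
noncomputable def powerMean (a x y : ℝ) : ℝ :=
  if a = 0 then Real.sqrt (x * y) else ((x ^ a + y ^ a) / 2) ^ (1/a)

theorem sqrt_mul_rpow_le_half_add_rpow (a : ℝ) {x y : ℝ} (hx : 0 < x) (hy : 0 < y) :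
    √(x * y) ^ a ≤ (x ^ a + y ^ a) / 2 := by
  have hsq : (√(x * y) ^ a) ^ 2 = x ^ a * y ^ a := by
    rw [← Real.rpow_mul_natCast (Real.sqrt_nonneg _), mul_comm a, Real.rpow_mul (Real.sqrt_nonneg _),
      Real.rpow_natCast, Real.sq_sqrt (by positivity), Real.mul_rpow hx.le hy.le]
  have hxa : 0 < x ^ a := Real.rpow_pos_of_pos hx a
  have hya : 0 < y ^ a := Real.rpow_pos_of_pos hy a
  refine abs_le_of_sq_le_sq' ?_ (by positivity) |>.2
  nlinarith [sq_nonneg (x ^ a - y ^ a)]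

theorem sqrt_mul_le_powerMean {a x y : ℝ} (ha : 0 ≤ a) (hx : 0 < x) (hy : 0 < y) :
    √(x * y) ≤ powerMean a x y := by
  unfold powerMean
  split_ifs with h
  · exact le_rfl
  · have ha' : 0 < a := lt_of_le_of_ne ha (Ne.symm h)
    calc √(x * y) = (√(x * y) ^ a) ^ (1 / a) := by
          rw [one_div, Real.rpow_rpow_inv (Real.sqrt_nonneg _) h]
      _ ≤ _ := Real.rpow_le_rpow (by positivity) (sqrt_mul_rpow_le_half_add_rpow a hx hy)
          (by positivity)

theorem powerMean_le_sqrt_mul {b x y : ℝ} (hb : b ≤ 0) (hx : 0 < x) (hy : 0 < y) :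
    powerMean b x y ≤ √(x * y) := by
  unfold powerMean
  split_ifs with h
  · exact le_rfl
  · have hpos : 0 < √(x * y) := Real.sqrt_pos.2 (by positivity)
    calc _ ≤ (√(x * y) ^ b) ^ (1 / b) :=
          Real.rpow_le_rpow_of_nonpos (by positivity) (sqrt_mul_rpow_le_half_add_rpow b hx hy)
            (one_div_nonpos.2 hb)
      _ = √(x * y) := by rw [one_div, Real.rpow_rpow_inv hpos.le h]

theorem arsinhPQ_integrand_pos (p q : ℝ) {t : ℝ} (ht : 0 ≤ t) :
    0 < (1 + t ^ q) ^ (-(1 / p)) := by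
  have := Real.rpow_nonneg ht q
  positivity

theorem continuousOn_arsinhPQ_integrand (p : ℝ) {q : ℝ} (hq : 0 ≤ q) :
    ContinuousOn (fun t : ℝ => (1 + t ^ q) ^ (-(1 / p))) (Ici 0) := by
  refine ContinuousOn.rpow_const ?_ fun t ht => Or.inl ?_
  · exact (continuous_const.add (Real.continuous_rpow_const hq)).continuousOn
  · have := Real.rpow_nonneg (mem_Ici.1 ht) q
    positivity

theorem intervalIntegrable_arsinhPQ_integrand (p : ℝ) {q k u v : ℝ} (hq : 0 ≤ q) (hk : 0 ≤ k)
    (hu : 0 ≤ u) (huv : u ≤ v) :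
    IntervalIntegrable (fun t : ℝ => (1 + (k * t) ^ q) ^ (-(1 / p))) MeasureTheory.volume u v := by
  refine ContinuousOn.intervalIntegrable_of_Icc huv ?_
  refine (continuousOn_arsinhPQ_integrand p hq).comp (f := fun t : ℝ => k * t) (by fun_prop) ?_
  exact fun t ht => mul_nonneg hk (hu.trans ht.1)

/-- For `1 ≤ k` the ratio `g (k * t) / g t` of the integrand `g` decreases in `t`. -/
theorem arsinhPQ_integrand_ratio_antitone {p q k t r : ℝ} (hp : 0 ≤ p) (hq : 0 ≤ q) (hk : 1 ≤ k)
    (ht : 0 ≤ t) (htr : t ≤ r) :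
    (1 + (k * r) ^ q) ^ (-(1 / p)) * (1 + t ^ q) ^ (-(1 / p)) ≤
      (1 + (k * t) ^ q) ^ (-(1 / p)) * (1 + r ^ q) ^ (-(1 / p)) := by
  have hr := ht.trans htr
  have hk0 : 0 ≤ k := by linarith
  have hkq : 1 ≤ k ^ q := Real.one_le_rpow hk hq
  have htq := Real.rpow_nonneg ht q
  have hle : t ^ q ≤ r ^ q := Real.rpow_le_rpow ht htr hq
  rw [Real.mul_rpow hk0 hr, Real.mul_rpow hk0 ht]
  have hrq := htq.trans hle
  rw [← Real.mul_rpow (x := 1 + _) (y := 1 + _) (by positivity) (by positivity),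
    ← Real.mul_rpow (x := 1 + _) (y := 1 + _) (by positivity) (by positivity)]
  refine Real.rpow_le_rpow_of_nonpos (by positivity) ?_ (neg_nonpos.2 (by positivity))
  nlinarith [mul_nonneg (sub_nonneg.2 hkq) (sub_nonneg.2 hle)]

theorem arsinhPQ_pos (p : ℝ) {q x : ℝ} (hq : 0 ≤ q) (hx : 0 < x) : 0 < arsinhPQ p q x := by
  refine intervalIntegral.intervalIntegral_pos_of_pos_on ?_
    (fun t ht => arsinhPQ_integrand_pos p q ht.1.le) hx
  simpa using intervalIntegrable_arsinhPQ_integrand p hq zero_le_one le_rfl hx.le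

theorem arsinhPQ_add_integral (p : ℝ) {q x y : ℝ} (hq : 0 ≤ q) (hx : 0 ≤ x) (hxy : x ≤ y) :
    arsinhPQ p q x + ∫ t in x..y, (1 + t ^ q) ^ (-(1 / p)) = arsinhPQ p q y := by
  refine intervalIntegral.integral_add_adjacent_intervals ?_ ?_
  · simpa using intervalIntegrable_arsinhPQ_integrand p hq zero_le_one le_rfl hx
  · simpa using intervalIntegrable_arsinhPQ_integrand p hq zero_le_one hx hxy

theorem arsinhPQ_le_arsinhPQ (p : ℝ) {q x y : ℝ} (hq : 0 ≤ q) (hx : 0 ≤ x) (hxy : x ≤ y) :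
    arsinhPQ p q x ≤ arsinhPQ p q y := by
  rw [← arsinhPQ_add_integral p hq hx hxy, le_add_iff_nonneg_right]
  exact intervalIntegral.integral_nonneg hxy fun t ht =>
    (arsinhPQ_integrand_pos p q (hx.trans ht.1)).le

theorem arsinhPQ_mul_le_sq {p q k r : ℝ} (hp : 0 ≤ p) (hq : 0 ≤ q) (hk : 1 ≤ k) (hr : 0 < r) :
    arsinhPQ p q r * arsinhPQ p q (k * (k * r)) ≤ arsinhPQ p q (k * r) ^ 2 := by
  have hk0 : 0 < k := by linarith
  have hrm : r ≤ k * r := le_mul_of_one_le_left hr.le hk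
  have hm : 0 < k * r := hr.trans_le hrm
  set g : ℝ → ℝ := fun t => (1 + t ^ q) ^ (-(1 / p)) with hg
  have hgr : 0 < g r := arsinhPQ_integrand_pos p q hr.le
  have hint {u v : ℝ} (hu : 0 ≤ u) (huv : u ≤ v) :
      IntervalIntegrable g MeasureTheory.volume u v := by
    simpa [hg] using intervalIntegrable_arsinhPQ_integrand p hq zero_le_one hu huv
  have hintk {u v : ℝ} (hu : 0 ≤ u) (huv : u ≤ v) :
      IntervalIntegrable (fun t => g (k * t)) MeasureTheory.volume u v :=
    intervalIntegrable_arsinhPQ_integrand p hq hk0.le hu huv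
  have hscale (u v : ℝ) : k * ∫ t in u..v, g (k * t) = ∫ t in (k * u)..(k * v), g t :=
    intervalIntegral.mul_integral_comp_mul_left ..
  have hlow : g (k * r) * ∫ t in (0:ℝ)..r, g t ≤ (∫ t in (0:ℝ)..r, g (k * t)) * g r := by
    rw [← intervalIntegral.integral_const_mul, ← intervalIntegral.integral_mul_const]
    exact intervalIntegral.integral_mono_on hr.le ((hint le_rfl hr.le).const_mul _)
      ((hintk le_rfl hr.le).mul_const _) fun t ht =>
        arsinhPQ_integrand_ratio_antitone hp hq hk ht.1 ht.2
  have hhigh : (∫ t in r..(k * r), g (k * t)) * g r ≤ g (k * r) * ∫ t in r..(k * r), g t := by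
    rw [← intervalIntegral.integral_const_mul, ← intervalIntegral.integral_mul_const]
    exact intervalIntegral.integral_mono_on hrm ((hintk hr.le hrm).mul_const _)
      ((hint hr.le hrm).const_mul _) fun t ht =>
        arsinhPQ_integrand_ratio_antitone hp hq hk hr.le ht.1
  have hB : 0 < ∫ t in (0:ℝ)..r, g t := arsinhPQ_pos p hq hr
  have hD : 0 ≤ ∫ t in r..(k * r), g t := intervalIntegral.integral_nonneg hrm fun t ht =>
    (arsinhPQ_integrand_pos p q (hr.le.trans ht.1)).le
  have hA : arsinhPQ p q (k * r) = k * ∫ t in (0:ℝ)..r, g (k * t) := by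
    rw [hscale, mul_zero]; rfl
  have hsum := arsinhPQ_add_integral p hq hr.le hrm
  have hsumk := arsinhPQ_add_integral p hq hm.le (le_mul_of_one_le_left hm.le hk)
  change arsinhPQ p q r + ∫ t in r..(k * r), g t = _ at hsum
  change _ + ∫ t in (k * r)..(k * (k * r)), g t = _ at hsumk
  change 0 < arsinhPQ p q r at hB
  change _ * arsinhPQ p q r ≤ _ at hlow
  rw [← hscale] at hsumk
  generalize (∫ t in (0:ℝ)..r, g (k * t)) = A at *
  generalize (∫ t in r..(k * r), g t) = D at *
  generalize (∫ t in r..(k * r), g (k * t)) = E at *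
  have key : E * arsinhPQ p q r ≤ A * D := by
    refine le_of_mul_le_mul_right ?_ hgr
    nlinarith [mul_le_mul_of_nonneg_right hhigh hB.le, mul_le_mul_of_nonneg_right hlow hD]
  have := mul_le_mul_of_nonneg_left key hk0.le
  rw [← hsumk]
  calc _ = arsinhPQ p q r * arsinhPQ p q (k * r) + k * (E * arsinhPQ p q r) := by ring
    _ ≤ arsinhPQ p q r * arsinhPQ p q (k * r) + k * (A * D) := by linarith
    _ = (arsinhPQ p q r + D) * arsinhPQ p q (k * r) := by rw [hA]; ring
    _ = _ := by rw [hsum]; ring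

theorem sqrt_arsinhPQ_mul_le {p q r s : ℝ} (hp : 0 ≤ p) (hq : 0 ≤ q) (hr : 0 < r) (hs : 0 < s) :
    √(arsinhPQ p q r * arsinhPQ p q s) ≤ arsinhPQ p q √(r * s) := by
  wlog hrs : r ≤ s generalizing r s
  · rw [mul_comm r, mul_comm (arsinhPQ p q r)]
    exact this hs hr (le_of_not_ge hrs)
  have hm : 0 < √(r * s) := Real.sqrt_pos.2 (by positivity)
  have hmm : √(r * s) * √(r * s) = r * s := Real.mul_self_sqrt (by positivity)
  have hk : 1 ≤ √(r * s) / r := by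
    rw [one_le_div hr]
    exact Real.le_sqrt_of_sq_le (by nlinarith)
  have hkr : √(r * s) / r * r = √(r * s) := by field_simp
  have hks : √(r * s) / r * √(r * s) = s := by
    rw [div_mul_eq_mul_div, hmm, mul_div_cancel_left₀ _ hr.ne']
  have := arsinhPQ_mul_le_sq hp hq hk hr
  rw [hkr, hks] at this
  exact Real.sqrt_le_iff.2 ⟨(arsinhPQ_pos p hq hm).le, this⟩

theorem arsinhPQ_ab_concave_nonneg_nonpos (p q a b : ℝ) (hp : 1 < p) (hq : 1 < q)
    (ha : 0 ≤ a) (hb : b ≤ 0)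
    (r s : ℝ) (hr : 0 < r) (hs : 0 < s) :
    arsinhPQ p q (powerMean a r s) ≥
      powerMean b (arsinhPQ p q r) (arsinhPQ p q s) := by
  have hp0 : 0 ≤ p := by linarith
  have hq0 : 0 ≤ q := by linarith
  calc powerMean b (arsinhPQ p q r) (arsinhPQ p q s)
      ≤ √(arsinhPQ p q r * arsinhPQ p q s) :=
        powerMean_le_sqrt_mul hb (arsinhPQ_pos p hq0 hr) (arsinhPQ_pos p hq0 hs)
    _ ≤ arsinhPQ p q √(r * s) := sqrt_arsinhPQ_mul_le hp0 hq0 hr hs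
    _ ≤ arsinhPQ p q (powerMean a r s) :=
        arsinhPQ_le_arsinhPQ p hq0 (Real.sqrt_nonneg _) (sqrt_mul_le_powerMean ha hr hs)
end

section
/- Let p, q > 1. Then for all r, s ∈ (0,1), π_{p,q}/2 − arccos_{p,q}(√(rs)) ≤ √((π_{p,q}/2 − arccos_{p,q}(r)) · (π_{p,q}/2 − arccos_{p,q}(s))), i.e. the function x ↦ π_{p,q}/2 − arccos_{p,q}(x) is geometrically convex on (0,1). -/
open Real Set

/-- `arccosPQ p q x = arcsinPQ p q ((1 - x^p)^(1/q))`. -/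
noncomputable def arccosPQ (p q x : ℝ) : ℝ := arcsinPQ p q ((1 - x ^ p) ^ (1/q))

/-- The integrand obtained from that of `arcsinPQ` by the substitution `t = (1 - a w)^(1/q)`. -/
noncomputable def arccosKernel (p q a w : ℝ) : ℝ :=
  a * (1/q) * (1 - a * w) ^ (1/q - 1) * (a * w) ^ (-(1/p))

lemma arccosKernel_nonneg {p q a w : ℝ} (hq : 0 < q) (ha : a ∈ Ioo (0:ℝ) 1)
    (hw : w ∈ Ioo (0:ℝ) 1) : 0 ≤ arccosKernel p q a w := by
  have h1 : 0 ≤ 1 - a * w := by nlinarith [ha.1, ha.2, hw.1, hw.2]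
  have h2 : 0 ≤ a * w := mul_nonneg ha.1.le hw.1.le
  have h3 := ha.1
  unfold arccosKernel
  positivity

lemma arccosKernel_sq_le {p q a b m w : ℝ} (hq : 1 < q) (ha : a ∈ Ioo (0:ℝ) 1)
    (hb : b ∈ Ioo (0:ℝ) 1) (hm : m ∈ Ioo (0:ℝ) 1) (hab : m ^ 2 = a * b)
    (hw : w ∈ Ioo (0:ℝ) 1) :
    arccosKernel p q m w ^ 2 ≤ arccosKernel p q a w * arccosKernel p q b w := by
  have pos {c : ℝ} (hc : c ∈ Ioo (0:ℝ) 1) : 0 < 1 - c * w := by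
    nlinarith [hc.1, hc.2, hw.1, hw.2]
  have pos' {c : ℝ} (hc : c ∈ Ioo (0:ℝ) 1) : 0 < c * w := mul_pos hc.1 hw.1
  have hq1 : 1/q - 1 ≤ 0 := by
    rw [sub_nonpos, div_le_one (by linarith)]
    exact hq.le
  have hmul : (1 - a * w) * (1 - b * w) ≤ (1 - m * w) ^ 2 := by
    have : 2 * m ≤ a + b := by
      refine abs_le_of_sq_le_sq' ?_ (by linarith [ha.1, hb.1]) |>.2
      nlinarith [sq_nonneg (a - b)]
    have h := mul_le_mul_of_nonneg_left this hw.1.le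
    linear_combination h - w ^ 2 * hab
  have hE : ((1 - m * w) ^ (1/q - 1)) ^ 2 ≤
      (1 - a * w) ^ (1/q - 1) * (1 - b * w) ^ (1/q - 1) := by
    rw [sq, ← mul_rpow (pos hm).le (pos hm).le, ← mul_rpow (pos ha).le (pos hb).le, ← sq]
    exact rpow_le_rpow_of_nonpos (mul_pos (pos ha) (pos hb)) hmul hq1
  have hP : ((m * w) ^ (-(1/p))) ^ 2 = (a * w) ^ (-(1/p)) * (b * w) ^ (-(1/p)) := by
    rw [sq, ← mul_rpow (pos' hm).le (pos' hm).le, ← mul_rpow (pos' ha).le (pos' hb).le]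
    congr 1
    linear_combination w ^ 2 * hab
  have hc : 0 ≤ a * b * (1/q) ^ 2 * ((a * w) ^ (-(1/p)) * (b * w) ^ (-(1/p))) := by
    have := pos' ha
    have := pos' hb
    have := ha.1
    have := hb.1
    positivity
  calc arccosKernel p q m w ^ 2
      = m ^ 2 * (1/q) ^ 2 * ((m * w) ^ (-(1/p))) ^ 2 * ((1 - m * w) ^ (1/q - 1)) ^ 2 := by
        unfold arccosKernel; ring
    _ ≤ a * b * (1/q) ^ 2 * ((a * w) ^ (-(1/p)) * (b * w) ^ (-(1/p))) *
          ((1 - a * w) ^ (1/q - 1) * (1 - b * w) ^ (1/q - 1)) := by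
        rw [hP, hab]
        exact mul_le_mul_of_nonneg_left hE hc
    _ = arccosKernel p q a w * arccosKernel p q b w := by
        unfold arccosKernel; ring

lemma integrableOn_arccosKernel {p q a : ℝ} (hp : 1 < p) (ha : a ∈ Ioo (0:ℝ) 1) :
    MeasureTheory.IntegrableOn (arccosKernel p q a) (Ioo 0 1) := by
  have hexp : -1 < -(1/p) := by
    rw [neg_lt_neg_iff, div_lt_one (by linarith)]
    exact hp
  have h1 : IntervalIntegrable (fun w : ℝ => w ^ (-(1/p))) MeasureTheory.volume 0 1 :=
    intervalIntegral.intervalIntegrable_rpow' hexp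
  have h2 : ContinuousOn
      (fun w : ℝ => a * (1/q) * (1 - a * w) ^ (1/q - 1) * a ^ (-(1/p))) (uIcc 0 1) := by
    rw [uIcc_of_le zero_le_one]
    refine ContinuousOn.mul (ContinuousOn.mul continuousOn_const ?_) continuousOn_const
    refine ContinuousOn.rpow_const (by fun_prop) fun w hw => Or.inl ?_
    nlinarith [ha.1, ha.2, hw.1, hw.2]
  have h3 := (intervalIntegrable_iff_integrableOn_Ioo_of_le zero_le_one).1
    (h1.continuousOn_mul h2)
  refine h3.congr_fun (fun w hw => ?_) measurableSet_Ioo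
  simp only [arccosKernel, mul_rpow ha.1.le hw.1.le]
  ring

lemma image_one_sub_mul_rpow {q a : ℝ} (hq : 0 < q) (ha : a ∈ Ioo (0:ℝ) 1) :
    (fun w : ℝ => (1 - a * w) ^ (1/q)) '' Ioo 0 1 = Ioo ((1 - a) ^ (1/q)) 1 := by
  have hq' : 0 < 1/q := by positivity
  ext t
  constructor
  · rintro ⟨w, hw, rfl⟩
    have h1 : 0 < 1 - a * w := by nlinarith [ha.1, ha.2, hw.1, hw.2]
    refine ⟨rpow_lt_rpow (by linarith [ha.2]) (by nlinarith [ha.1, hw.2]) hq',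
      rpow_lt_one h1.le (by nlinarith [ha.1, hw.1]) hq'⟩
  · rintro ⟨h1, h2⟩
    have ht : 0 < t := (rpow_pos_of_pos (by linarith [ha.2]) _).trans h1
    have h3 : t ^ q < 1 := rpow_lt_one ht.le h2 hq
    have h4 : 1 - a < t ^ q := by
      have := rpow_lt_rpow (rpow_nonneg (by linarith [ha.2]) _) h1 hq
      rwa [← rpow_mul (by linarith [ha.2]), one_div_mul_cancel hq.ne', rpow_one] at this
    refine ⟨(1 - t ^ q) / a, ⟨div_pos (by linarith) ha.1, ?_⟩, ?_⟩
    · rw [div_lt_one ha.1]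
      linarith
    · simp only
      rw [mul_div_cancel₀ _ ha.1.ne', sub_sub_cancel, ← rpow_mul ht.le,
        mul_one_div_cancel hq.ne', rpow_one]

lemma integrableOn_and_integral_eq_arccosKernel {p q a : ℝ} (hp : 1 < p) (hq : 1 < q)
    (ha : a ∈ Ioo (0:ℝ) 1) :
    MeasureTheory.IntegrableOn (fun t : ℝ => (1 - t ^ q) ^ (-(1/p)))
        (Ioo ((1 - a) ^ (1/q)) 1) ∧
      ∫ t in Ioo ((1 - a) ^ (1/q)) 1, (1 - t ^ q) ^ (-(1/p)) =
        ∫ w in Ioo 0 1, arccosKernel p q a w := by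
  have hq0 : 0 < q := by linarith
  have pos {w : ℝ} (hw : w ∈ Ioo (0:ℝ) 1) : 0 < 1 - a * w := by
    nlinarith [ha.1, ha.2, hw.1, hw.2]
  have hderiv : ∀ w ∈ Ioo (0:ℝ) 1, HasDerivWithinAt (fun w : ℝ => (1 - a * w) ^ (1/q))
      (-a * (1/q) * (1 - a * w) ^ (1/q - 1)) (Ioo 0 1) w := by
    intro w hw
    have h : HasDerivAt (fun w : ℝ => 1 - a * w) (-a) w := by
      simpa using ((hasDerivAt_id w).const_mul a).const_sub 1
    exact (h.rpow_const (Or.inl (pos hw).ne')).hasDerivWithinAt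
  have hinj : InjOn (fun w : ℝ => (1 - a * w) ^ (1/q)) (Ioo 0 1) := by
    intro v hv w hw h
    have := (rpow_left_inj (pos hv).le (pos hw).le (by positivity)).1 h
    exact mul_left_cancel₀ ha.1.ne' (by linarith)
  have hker : EqOn (fun w : ℝ => |-a * (1/q) * (1 - a * w) ^ (1/q - 1)| •
      (1 - ((1 - a * w) ^ (1/q)) ^ q) ^ (-(1/p))) (arccosKernel p q a) (Ioo 0 1) := by
    intro w hw
    have h1 := pos hw
    have h2 := ha.1
    have h3 : 0 ≤ a * (1/q) * (1 - a * w) ^ (1/q - 1) := by positivity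
    simp only [smul_eq_mul]
    rw [neg_mul, neg_mul, abs_neg, abs_of_nonneg h3, ← rpow_mul h1.le,
      one_div_mul_cancel hq0.ne', rpow_one, sub_sub_cancel, arccosKernel]
  rw [← image_one_sub_mul_rpow hq0 ha]
  constructor
  · rw [MeasureTheory.integrableOn_image_iff_integrableOn_abs_deriv_smul measurableSet_Ioo
      hderiv hinj]
    exact (integrableOn_arccosKernel hp ha).congr_fun hker.symm measurableSet_Ioo
  · rw [MeasureTheory.integral_image_eq_integral_abs_deriv_smul measurableSet_Ioo hderiv hinj]
    exact MeasureTheory.setIntegral_congr_fun measurableSet_Ioo hker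

lemma arcsinPQ_one_sub_eq_and_pos {p q a : ℝ} (hp : 1 < p) (hq : 1 < q)
    (ha : a ∈ Ioo (0:ℝ) 1) :
    arcsinPQ p q 1 - arcsinPQ p q ((1 - a) ^ (1/q)) = ∫ w in Ioo 0 1, arccosKernel p q a w ∧
      0 < arcsinPQ p q 1 - arcsinPQ p q ((1 - a) ^ (1/q)) := by
  have hq0 : 0 < q := by linarith
  obtain ⟨hint, heq⟩ := integrableOn_and_integral_eq_arccosKernel hp hq ha
  have hT0 : 0 ≤ (1 - a) ^ (1/q) := rpow_nonneg (by linarith [ha.2]) _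
  have hT1 : (1 - a) ^ (1/q) < 1 :=
    rpow_lt_one (by linarith [ha.2]) (by linarith [ha.1]) (by positivity)
  generalize (1 - a) ^ (1/q) = T at *
  have pos {t : ℝ} (h0 : 0 ≤ t) (h1 : t < 1) : 0 < 1 - t ^ q := by
    linarith [rpow_lt_one h0 h1 hq0]
  have hleft : IntervalIntegrable (fun t : ℝ => (1 - t ^ q) ^ (-(1/p)))
      MeasureTheory.volume 0 T := by
    apply ContinuousOn.intervalIntegrable
    rw [uIcc_of_le hT0]
    refine ContinuousOn.rpow_const ?_ fun t ht => Or.inl (pos ht.1 (ht.2.trans_lt hT1)).ne'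
    exact (continuous_const.sub (continuous_id.rpow_const fun _ => Or.inr hq0.le)).continuousOn
  have hright : IntervalIntegrable (fun t : ℝ => (1 - t ^ q) ^ (-(1/p)))
      MeasureTheory.volume T 1 :=
    (intervalIntegrable_iff_integrableOn_Ioo_of_le hT1.le).2 hint
  have hsub : arcsinPQ p q 1 - arcsinPQ p q T = ∫ t in T..1, (1 - t ^ q) ^ (-(1/p)) :=
    intervalIntegral.integral_interval_sub_left (hleft.trans hright) hleft
  rw [hsub]
  constructor
  · rw [intervalIntegral.integral_of_le hT1.le, MeasureTheory.integral_Ioc_eq_integral_Ioo, heq]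
  · exact intervalIntegral.intervalIntegral_pos_of_pos_on hright
      (fun t ht => rpow_pos_of_pos (pos (hT0.trans ht.1.le) ht.2) _) hT1

/-- Cauchy–Schwarz for a function `h` with `h² ≤ f g` pointwise. -/
lemma setIntegral_le_sqrt_mul_of_sq_le {S : Set ℝ} (hS : MeasurableSet S) {f g h : ℝ → ℝ}
    (hf : MeasureTheory.IntegrableOn f S) (hg : MeasureTheory.IntegrableOn g S)
    (hf0 : ∀ x ∈ S, 0 ≤ f x) (hg0 : ∀ x ∈ S, 0 ≤ g x) (hh0 : ∀ x ∈ S, 0 ≤ h x)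
    (hle : ∀ x ∈ S, h x ^ 2 ≤ f x * g x)
    (hA : 0 < ∫ x in S, f x) (hB : 0 < ∫ x in S, g x) :
    ∫ x in S, h x ≤ √((∫ x in S, f x) * ∫ x in S, g x) := by
  set A := ∫ x in S, f x with hAdef
  set B := ∫ x in S, g x with hBdef
  have hα := sqrt_pos.2 hA
  have hβ := sqrt_pos.2 hB
  have hpt : ∀ x ∈ S, h x ≤ √B / (2 * √A) * f x + √A / (2 * √B) * g x := by
    intro x hx
    have h1 := hf0 x hx
    have h2 := hg0 x hx
    refine abs_le_of_sq_le_sq' ((hle x hx).trans ?_) (by positivity) |>.2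
    have key : (√B / (2 * √A)) * (√A / (2 * √B)) = 1/4 := by
      field_simp
      norm_num
    nlinarith [sq_nonneg (√B / (2 * √A) * f x - √A / (2 * √B) * g x)]
  calc ∫ x in S, h x ≤ ∫ x in S, (√B / (2 * √A) * f x + √A / (2 * √B) * g x) := by
        refine MeasureTheory.integral_mono_of_nonneg
          (MeasureTheory.ae_restrict_of_forall_mem hS hh0)
          ((hf.const_mul _).add (hg.const_mul _))
          (MeasureTheory.ae_restrict_of_forall_mem hS hpt)
    _ = √B / (2 * √A) * A + √A / (2 * √B) * B := by
        rw [MeasureTheory.integral_add (hf.const_mul _) (hg.const_mul _),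
          MeasureTheory.integral_const_mul, MeasureTheory.integral_const_mul]
    _ = √(A * B) := by
        rw [sqrt_mul hA.le]
        have h1 := sq_sqrt hA.le
        have h2 := sq_sqrt hB.le
        generalize √A = α at *
        generalize √B = β at *
        rw [← h1, ← h2]
        field_simp
        ring

theorem pi_sub_arccosPQ_geom_convex (p q : ℝ) (hp : 1 < p) (hq : 1 < q)
    (r s : ℝ) (hr : r ∈ Set.Ioo (0:ℝ) 1) (hs : s ∈ Set.Ioo (0:ℝ) 1) :
    arcsinPQ p q 1 - arccosPQ p q (Real.sqrt (r * s)) ≤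
      Real.sqrt ((arcsinPQ p q 1 - arccosPQ p q r) * (arcsinPQ p q 1 - arccosPQ p q s)) := by
  have hp0 : 0 < p := by linarith
  have hq0 : 0 < q := by linarith
  have mem {x : ℝ} (hx : x ∈ Ioo (0:ℝ) 1) : x ^ p ∈ Ioo (0:ℝ) 1 :=
    ⟨rpow_pos_of_pos hx.1 _, rpow_lt_one hx.1.le hx.2 hp0⟩
  have hrs : 0 < r * s := mul_pos hr.1 hs.1
  have hm : √(r * s) ∈ Ioo (0:ℝ) 1 := by
    refine ⟨sqrt_pos.2 hrs, ?_⟩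
    rw [sqrt_lt' one_pos]
    nlinarith [hr.1, hr.2, hs.1, hs.2]
  have hmul : (√(r * s) ^ p) ^ 2 = r ^ p * s ^ p := by
    rw [sq, ← mul_rpow hm.1.le hm.1.le, mul_self_sqrt hrs.le, mul_rpow hr.1.le hs.1.le]
  obtain ⟨er, pr⟩ := arcsinPQ_one_sub_eq_and_pos hp hq (mem hr)
  obtain ⟨es, ps⟩ := arcsinPQ_one_sub_eq_and_pos hp hq (mem hs)
  obtain ⟨em, -⟩ := arcsinPQ_one_sub_eq_and_pos hp hq (mem hm)
  unfold arccosPQ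
  rw [er] at pr
  rw [es] at ps
  rw [er, es, em]
  exact setIntegral_le_sqrt_mul_of_sq_le measurableSet_Ioo
    (integrableOn_arccosKernel hp (mem hr)) (integrableOn_arccosKernel hp (mem hs))
    (fun _ => arccosKernel_nonneg hq0 (mem hr)) (fun _ => arccosKernel_nonneg hq0 (mem hs))
    (fun _ => arccosKernel_nonneg hq0 (mem hm))
    (fun _ => arccosKernel_sq_le hq (mem hr) (mem hs) (mem hm) hmul) pr ps
end

section
/- Let p, q > 1 and a ≥ 0. Then the function f : (0,1) → ℝ defined by f(x) = (arcsin_{p,q}(x)/x)^a · (1 - x^q)^{-1/p} is increasing on (0,1). -/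
open Real Set

theorem monotoneOn_one_sub_rpow_rpow_neg {q r : ℝ} (hq : 0 ≤ q) (hr : 0 ≤ r) :
    MonotoneOn (fun t : ℝ => (1 - t ^ q) ^ (-r)) (Set.Ico 0 1) := by
  intro x hx y hy hxy
  rcases hq.eq_or_lt with rfl | hq
  · simp
  have hy1 : y ^ q < 1 := Real.rpow_lt_one hy.1 hy.2 hq
  have hxy' : x ^ q ≤ y ^ q := Real.rpow_le_rpow hx.1 hxy hq.le
  exact Real.rpow_le_rpow_of_nonpos (by linarith) (by linarith) (by linarith)

theorem arcsinPQ_div_eq_integral (p q : ℝ) {x : ℝ} (hx : x ≠ 0) :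
    arcsinPQ p q x / x = ∫ s in (0:ℝ)..1, (1 - (x * s) ^ q) ^ (-(1/p)) := by
  rw [intervalIntegral.integral_comp_mul_left (fun t => (1 - t ^ q) ^ (-(1/p))) hx]
  simp [arcsinPQ, div_eq_inv_mul]

theorem arcsinPQ_div_nonneg (p q : ℝ) (hq : 0 ≤ q) {x : ℝ} (hx : x ∈ Set.Ioo (0:ℝ) 1) :
    0 ≤ arcsinPQ p q x / x := by
  refine div_nonneg (intervalIntegral.integral_nonneg hx.1.le fun t ht => ?_) hx.1.le
  exact Real.rpow_nonneg
    (sub_nonneg.2 (Real.rpow_le_one ht.1 (ht.2.trans hx.2.le) hq)) _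

theorem monotoneOn_arcsinPQ_div {p q : ℝ} (hp : 0 ≤ p) (hq : 0 ≤ q) :
    MonotoneOn (fun x => arcsinPQ p q x / x) (Set.Ioo (0:ℝ) 1) := by
  have hmono := monotoneOn_one_sub_rpow_rpow_neg hq (one_div_nonneg.2 hp)
  have hmem : ∀ x ∈ Set.Ioo (0:ℝ) 1, ∀ s ∈ Set.Icc (0:ℝ) 1, x * s ∈ Set.Ico (0:ℝ) 1 :=
    fun x hx s hs => ⟨mul_nonneg hx.1.le hs.1,
      (mul_le_of_le_one_right hx.1.le hs.2).trans_lt hx.2⟩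
  have hint : ∀ x ∈ Set.Ioo (0:ℝ) 1, IntervalIntegrable
      (fun s => (1 - (x * s) ^ q) ^ (-(1/p))) MeasureTheory.volume 0 1 := by
    intro x hx
    apply MonotoneOn.intervalIntegrable
    rw [Set.uIcc_of_le zero_le_one]
    intro s hs t ht hst
    exact hmono (hmem x hx s hs) (hmem x hx t ht) (mul_le_mul_of_nonneg_left hst hx.1.le)
  intro x hx y hy hxy
  simp only [arcsinPQ_div_eq_integral p q hx.1.ne', arcsinPQ_div_eq_integral p q hy.1.ne']
  refine intervalIntegral.integral_mono_on zero_le_one (hint x hx) (hint y hy) fun s hs => ?_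
  exact hmono (hmem x hx s hs) (hmem y hy s hs) (mul_le_mul_of_nonneg_right hxy hs.1)

theorem arcsinPQ_aux_monotone (p q a : ℝ) (hp : 1 < p) (hq : 1 < q) (ha : 0 ≤ a) :
    MonotoneOn (fun x => (arcsinPQ p q x / x) ^ a * (1 - x ^ q) ^ (-(1/p)))
      (Set.Ioo (0:ℝ) 1) := by
  have hp0 : 0 ≤ p := by linarith
  have hq0 : 0 ≤ q := by linarith
  intro x hx y hy hxy
  refine mul_le_mul ?_ ?_ ?_ ?_
  · exact Real.rpow_le_rpow (arcsinPQ_div_nonneg p q hq0 hx)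
      (monotoneOn_arcsinPQ_div hp0 hq0 hx hy hxy) ha
  · exact monotoneOn_one_sub_rpow_rpow_neg hq0 (one_div_nonneg.2 hp0)
      (Set.Ioo_subset_Ico_self hx) (Set.Ioo_subset_Ico_self hy) hxy
  · exact Real.rpow_nonneg (sub_nonneg.2 (Real.rpow_le_one hx.1.le hx.2.le hq0)) _
  · exact Real.rpow_nonneg (arcsinPQ_div_nonneg p q hq0 hy) _
end

section
/- Let p, q > 1 and a ≥ 0. Then the function x ↦ (sinh_{p,q}(x)/x)^a · (1 + sinh_{p,q}(x)^q)^{1/p} is increasing on (0,1). -/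
open Real Set

/-- `sinhPQ p q` is the inverse function of `arsinhPQ p q` (restricted to `[0,∞)`). -/
noncomputable def sinhPQ (p q : ℝ) : ℝ → ℝ := Function.invFunOn (arsinhPQ p q) (Set.Ici 0)

/-- The integrand of `arsinhPQ` is antitone on `[0, ∞)`. -/
lemma antitoneOn_one_add_rpow_rpow {p q : ℝ} (hp : 0 ≤ p) (hq : 0 ≤ q) :
    AntitoneOn (fun t : ℝ => (1 + t ^ q) ^ (-(1 / p))) (Ici 0) := by
  intro s hs t ht hst
  have hs' : 0 ≤ s := hs
  have h0 : 0 ≤ s ^ q := rpow_nonneg hs' q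
  have h1 : s ^ q ≤ t ^ q := rpow_le_rpow hs' hst hq
  have h2 : 0 ≤ 1 / p := by positivity
  exact rpow_le_rpow_of_nonpos (by linarith) (by linarith) (by linarith)

lemma intervalIntegrable_one_add_rpow_rpow {p q s t : ℝ} (hp : 0 ≤ p) (hq : 0 ≤ q)
    (hs : 0 ≤ s) (ht : 0 ≤ t) :
    IntervalIntegrable (fun t : ℝ => (1 + t ^ q) ^ (-(1 / p))) MeasureTheory.volume s t :=
  ((antitoneOn_one_add_rpow_rpow hp hq).mono
    fun _ hx => (le_min hs ht).trans hx.1).intervalIntegrable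

lemma arsinhPQ_sub {p q s t : ℝ} (hp : 0 ≤ p) (hq : 0 ≤ q) (hs : 0 ≤ s) (ht : 0 ≤ t) :
    arsinhPQ p q t - arsinhPQ p q s = ∫ u in s..t, (1 + u ^ q) ^ (-(1 / p)) :=
  intervalIntegral.integral_interval_sub_left
    (intervalIntegrable_one_add_rpow_rpow hp hq le_rfl ht)
    (intervalIntegrable_one_add_rpow_rpow hp hq le_rfl hs)

lemma arsinhPQ_zero (p q : ℝ) : arsinhPQ p q 0 = 0 := by simp [arsinhPQ]

lemma arsinhPQ_sub_le {p q s t : ℝ} (hp : 0 ≤ p) (hq : 0 ≤ q) (hs : 0 ≤ s) (hst : s ≤ t) :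
    arsinhPQ p q t - arsinhPQ p q s ≤ (t - s) * (1 + s ^ q) ^ (-(1 / p)) := by
  have ht := hs.trans hst
  rw [arsinhPQ_sub hp hq hs ht, ← smul_eq_mul, ← intervalIntegral.integral_const]
  exact intervalIntegral.integral_mono_on hst
    (intervalIntegrable_one_add_rpow_rpow hp hq hs ht) intervalIntegrable_const
    fun u hu => antitoneOn_one_add_rpow_rpow hp hq hs (hs.trans hu.1) hu.1

lemma le_arsinhPQ_sub {p q s t : ℝ} (hp : 0 ≤ p) (hq : 0 ≤ q) (hs : 0 ≤ s) (hst : s ≤ t) :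
    (t - s) * (1 + t ^ q) ^ (-(1 / p)) ≤ arsinhPQ p q t - arsinhPQ p q s := by
  have ht := hs.trans hst
  rw [arsinhPQ_sub hp hq hs ht, ← smul_eq_mul, ← intervalIntegral.integral_const]
  exact intervalIntegral.integral_mono_on hst
    intervalIntegrable_const (intervalIntegrable_one_add_rpow_rpow hp hq hs ht)
    fun u hu => antitoneOn_one_add_rpow_rpow hp hq (hs.trans hu.1) ht hu.2

lemma strictMonoOn_arsinhPQ {p q : ℝ} (hp : 0 ≤ p) (hq : 0 ≤ q) :
    StrictMonoOn (arsinhPQ p q) (Ici 0) := by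
  intro s hs t ht hst
  have ht' : 0 ≤ t := ht
  have h := le_arsinhPQ_sub hp hq hs hst.le
  have hpos : 0 < (t - s) * (1 + t ^ q) ^ (-(1 / p)) :=
    mul_pos (sub_pos.2 hst) (by positivity)
  linarith

/-- Concavity of `arsinhPQ` in the form: `arsinhPQ p q t / t` is antitone. -/
lemma mul_arsinhPQ_le_mul_arsinhPQ {p q s t : ℝ} (hp : 0 ≤ p) (hq : 0 ≤ q) (hs : 0 ≤ s)
    (hst : s ≤ t) : s * arsinhPQ p q t ≤ t * arsinhPQ p q s := by
  have h1 := mul_le_mul_of_nonneg_left (arsinhPQ_sub_le hp hq hs hst) hs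
  have h2 := mul_le_mul_of_nonneg_left (le_arsinhPQ_sub hp hq le_rfl hs) (sub_nonneg.2 hst)
  rw [arsinhPQ_zero] at h2
  linarith

lemma continuousOn_arsinhPQ {p q y : ℝ} (hp : 0 ≤ p) (hq : 0 ≤ q) (hy : 0 ≤ y) :
    ContinuousOn (arsinhPQ p q) (Icc 0 y) := by
  have h := intervalIntegral.continuousOn_primitive_interval
    ((intervalIntegrable_iff' (by simp)).1
      (intervalIntegrable_one_add_rpow_rpow hp hq le_rfl hy))
  rwa [uIcc_of_le hy] at h

lemma hasDerivAt_mul_one_add_rpow_rpow {q t : ℝ} (hq : 1 ≤ q) (ht : 0 ≤ t) :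
    HasDerivAt (fun t : ℝ => t * (1 + t ^ q) ^ (-(1 / q))) ((1 + t ^ q) ^ (-(1 / q) - 1)) t := by
  have hq0 : q ≠ 0 := by linarith
  have hpos : 0 < 1 + t ^ q := by positivity
  have h1 : HasDerivAt (fun t : ℝ => 1 + t ^ q) (q * t ^ (q - 1)) t :=
    (hasDerivAt_rpow_const (Or.inr hq)).const_add 1
  have h2 := (hasDerivAt_id t).mul (h1.rpow_const (p := -(1 / q)) (Or.inl hpos.ne'))
  refine h2.congr_deriv ?_
  have h3 : (1 + t ^ q) ^ (-(1 / q)) = (1 + t ^ q) ^ (-(1 / q) - 1) * (1 + t ^ q) := by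
    rw [← rpow_add_one hpos.ne', sub_add_cancel]
  have h4 : t * t ^ (q - 1) = t ^ q := by
    rcases ht.eq_or_lt with rfl | ht
    · simp [zero_rpow hq0]
    · rw [rpow_sub_one ht.ne', mul_div_cancel₀ _ ht.ne']
  simp only [id]
  rw [h3, ← h4]
  field_simp
  ring

lemma mul_one_add_rpow_rpow_le_arsinhPQ {p q y : ℝ} (hp : 1 ≤ p) (hq : 1 ≤ q) (hy : 0 ≤ y) :
    y * (1 + y ^ q) ^ (-(1 / q)) ≤ arsinhPQ p q y := by
  have hp0 : 0 ≤ p := by linarith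
  have hq0 : 0 ≤ q := by linarith
  have hcont : ContinuousOn (fun t : ℝ => (1 + t ^ q) ^ (-(1 / q) - 1)) (uIcc 0 y) := by
    rw [uIcc_of_le hy]
    refine ContinuousOn.rpow_const ?_ fun t ht => Or.inl ?_
    · exact (continuous_const.add (continuous_rpow_const hq0)).continuousOn
    · have := rpow_nonneg ht.1 q
      positivity
  have hint := hcont.intervalIntegrable (μ := MeasureTheory.volume)
  have h := intervalIntegral.integral_eq_sub_of_hasDerivAt
    (fun t ht => hasDerivAt_mul_one_add_rpow_rpow hq (by rw [uIcc_of_le hy] at ht; exact ht.1)) hint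
  rw [zero_mul, sub_zero] at h
  rw [← h]
  refine intervalIntegral.integral_mono_on hy hint
    (intervalIntegrable_one_add_rpow_rpow hp0 hq0 le_rfl hy) fun t ht => ?_
  have h1 : 0 ≤ t ^ q := rpow_nonneg ht.1 q
  have h2 : 1 / p ≤ 1 := by rw [div_le_one] <;> linarith
  have h3 : 0 ≤ 1 / q := by positivity
  exact rpow_le_rpow_of_exponent_le (by linarith) (by linarith)

/-- The range of `arsinhPQ p q` on `[0, ∞)` contains `(0, 1)`. -/
lemma exists_arsinhPQ_eq {p q x : ℝ} (hp : 1 ≤ p) (hq : 1 ≤ q) (hx : x ∈ Ioo (0 : ℝ) 1) :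
    ∃ s ∈ Ici (0 : ℝ), arsinhPQ p q s = x := by
  obtain ⟨hx0, hx1⟩ := hx
  have hq0 : 0 < q := by linarith
  have hc : 0 < 1 - x ^ q := sub_pos.2 (rpow_lt_one hx0.le hx1 hq0)
  set y := x * (1 - x ^ q) ^ (-(1 / q)) with hy_def
  have hy : 0 ≤ y := by positivity
  have hyq : 1 + y ^ q = (1 - x ^ q)⁻¹ := by
    rw [hy_def, mul_rpow hx0.le (by positivity), ← rpow_mul hc.le,
      show -(1 / q) * q = -1 by field_simp, rpow_neg_one]
    field_simp
    ring
  have hxy : y * (1 + y ^ q) ^ (-(1 / q)) = x := by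
    rw [hyq, inv_rpow hc.le, hy_def, mul_inv_cancel_right₀ (by positivity)]
  have hle := mul_one_add_rpow_rpow_le_arsinhPQ hp hq hy
  rw [hxy] at hle
  obtain ⟨s, hs, h⟩ := intermediate_value_Icc hy
    (continuousOn_arsinhPQ (by linarith) hq0.le hy) ⟨by rw [arsinhPQ_zero]; exact hx0.le, hle⟩
  exact ⟨s, hs.1, h⟩

theorem sinhPQ_aux_monotone (p q a : ℝ) (hp : 1 < p) (hq : 1 < q) (ha : 0 ≤ a) :
    MonotoneOn (fun x => (sinhPQ p q x / x) ^ a * (1 + sinhPQ p q x ^ q) ^ (1/p))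
      (Set.Ioo (0:ℝ) 1) := by
  intro x hx y hy hxy
  have hp0 : 0 ≤ p := by linarith
  have hq0 : 0 ≤ q := by linarith
  have hsx : 0 ≤ sinhPQ p q x := Function.invFunOn_mem (exists_arsinhPQ_eq hp.le hq.le hx)
  have hsy : 0 ≤ sinhPQ p q y := Function.invFunOn_mem (exists_arsinhPQ_eq hp.le hq.le hy)
  have hax : arsinhPQ p q (sinhPQ p q x) = x :=
    Function.invFunOn_eq (exists_arsinhPQ_eq hp.le hq.le hx)
  have hay : arsinhPQ p q (sinhPQ p q y) = y :=
    Function.invFunOn_eq (exists_arsinhPQ_eq hp.le hq.le hy)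
  have hle : sinhPQ p q x ≤ sinhPQ p q y := by
    rwa [← (strictMonoOn_arsinhPQ hp0 hq0).le_iff_le hsx hsy, hax, hay]
  have hx0 := hx.1
  have hy0 := hy.1
  have hdiv : sinhPQ p q x / x ≤ sinhPQ p q y / y := by
    rw [div_le_div_iff₀ hx0 hy0]
    have h := mul_arsinhPQ_le_mul_arsinhPQ hp0 hq0 hsx hle
    rwa [hax, hay] at h
  dsimp only
  gcongr
end
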